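/- Let m be a positive integer and v ∈ F^n. If Ω' is a finite set of monomials x^i y^j z^k of R[z] (with 0 ≤ j ≤ q−1) such that |Ω'| > n·m(m+1)/2, then there exist coefficients c_φ ∈ F, not all zero, such that Σ_{φ ∈ Ω'} c_φ φ lies in the ideal I_{v,m} = ⟨z − h_v, η⟩^m of R[z]. -/

import Mathlib

set_option synthInstance.maxHeartbeats 1000000
set_option maxHeartbeats 1000000

open MvPolynomial

/-- The polynomial `H_i ∈ F[X,Y]` attached to the rational point `(α, β)` of the Hermitian
curve: `H = −∏_{a ∈ F, a ≠ α} (X − a) · ∏_{b ∈ F, b ≠ β, b^q + b = β^q + β} (Y − b)`. -/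
noncomputable def Hpoly (q : ℕ) {F : Type*} [Field F] [Fintype F] [DecidableEq F]
    (α β : F) : MvPolynomial (Fin 2) F :=
  -((∏ a ∈ Finset.univ.erase α, (X 0 - C a)) *
    ∏ b ∈ (Finset.univ.filter fun b : F => b ^ q + b = β ^ q + β).erase β, (X 1 - C b))

/-- Index pairs `(s,t)` with `s + t < m`. -/
def trianglePairs (m : ℕ) : Finset (ℕ × ℕ) :=
  (Finset.range m).biUnion fun n => (Finset.HasAntidiagonal.antidiagonal n : Finset (ℕ × ℕ))

lemma mem_trianglePairs {m : ℕ} {p : ℕ × ℕ} : p ∈ trianglePairs m ↔ p.1 + p.2 < m := by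
  simp [trianglePairs]

lemma card_trianglePairs (m : ℕ) : (trianglePairs m).card ≤ Nat.choose (m + 1) 2 := by
  refine Finset.card_biUnion_le.trans ?_
  induction m with
  | zero => simp
  | succ m ih =>
    rw [Finset.sum_range_succ, Nat.choose_succ_succ' (m + 1) 1]
    simp only [Finset.Nat.card_antidiagonal, Nat.reduceAdd, Nat.choose_one_right] at *
    omega

/-- Filtration lemma: generators modulo `(f,g)` give generators modulo `(f,g)^m`. -/
lemma filtration_top {F A : Type*} [Field F] [CommRing A] [Algebra F A] (f g : A) (B : Set A)
    (hB : ∀ a : A, ∃ w ∈ Submodule.span F B, a - w ∈ Ideal.span {f, g}) (m : ℕ) :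
    ∀ a : A, ∃ w ∈ Submodule.span F
      {w : A | ∃ b ∈ B, ∃ p ∈ trianglePairs m, w = b * (f ^ p.1 * g ^ p.2)},
      a - w ∈ (Ideal.span {f, g}) ^ m := by
  induction m with
  | zero => intro a; exact ⟨0, Submodule.zero_mem _, by simp⟩
  | succ m ih =>
    intro a
    obtain ⟨w, hw, haw⟩ := hB a
    obtain ⟨a1, a2, h12⟩ := Ideal.mem_span_pair.1 haw
    obtain ⟨w1, hw1, h1⟩ := ih a1
    obtain ⟨w2, hw2, h2⟩ := ih a2
    refine ⟨w + f * w1 + g * w2, ?_, ?_⟩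
    · refine Submodule.add_mem _ (Submodule.add_mem _ ?_ ?_) ?_
      · refine Submodule.span_mono ?_ hw
        intro b hb
        exact ⟨b, hb, (0, 0), mem_trianglePairs.2 (by simp), by simp⟩
      · have := Submodule.mem_map_of_mem (f := LinearMap.mulLeft F f) hw1
        rw [Submodule.map_span] at this
        refine Submodule.span_mono ?_ this
        rintro _ ⟨_, ⟨b, hb, p, hp, rfl⟩, rfl⟩
        rw [mem_trianglePairs] at hp
        refine ⟨b, hb, (p.1 + 1, p.2), mem_trianglePairs.2 (by simp; omega), ?_⟩
        simp only [LinearMap.mulLeft_apply]; ring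
      · have := Submodule.mem_map_of_mem (f := LinearMap.mulLeft F g) hw2
        rw [Submodule.map_span] at this
        refine Submodule.span_mono ?_ this
        rintro _ ⟨_, ⟨b, hb, p, hp, rfl⟩, rfl⟩
        rw [mem_trianglePairs] at hp
        refine ⟨b, hb, (p.1, p.2 + 1), mem_trianglePairs.2 (by simp; omega), ?_⟩
        simp only [LinearMap.mulLeft_apply]; ring
    · have : a - (w + f * w1 + g * w2) = f * (a1 - w1) + g * (a2 - w2) := by
        linear_combination -h12
      rw [this, pow_succ']
      exact Ideal.add_mem _
        (Ideal.mul_mem_mul (Ideal.subset_span (by simp)) h1)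
        (Ideal.mul_mem_mul (Ideal.subset_span (by simp)) h2)

/-- Dimension count: more than `|B| * m(m+1)/2` elements are dependent modulo `(f,g)^m`. -/
lemma exists_relation {F A ι : Type*} [Field F] [CommRing A] [Algebra F A] (f g : A)
    (B : Finset A)
    (hB : ∀ a : A, ∃ w ∈ Submodule.span F (B : Set A), a - w ∈ Ideal.span {f, g}) (m : ℕ)
    (S : Finset ι) (u : ι → A) (hS : B.card * Nat.choose (m + 1) 2 < S.card) :
    ∃ c : ι → F, (∃ i ∈ S, c i ≠ 0) ∧
      ∑ i ∈ S, c i • u i ∈ (Ideal.span {f, g}) ^ m := by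
  classical
  let I : Submodule F A := ((Ideal.span {f, g}) ^ m).restrictScalars F
  let T : Finset (A ⧸ I) := (B ×ˢ trianglePairs m).image
    fun bp => I.mkQ (bp.1 * (f ^ bp.2.1 * g ^ bp.2.2))
  have hT : Submodule.span F (T : Set (A ⧸ I)) = ⊤ := by
    rw [eq_top_iff]
    rintro y -
    obtain ⟨a, rfl⟩ := I.mkQ_surjective y
    obtain ⟨w, hw, haw⟩ := filtration_top f g (B : Set A) hB m a
    have h1 : I.mkQ a = I.mkQ w := by
      rw [← sub_eq_zero, ← map_sub, Submodule.mkQ_apply, Submodule.Quotient.mk_eq_zero]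
      exact haw
    rw [h1]
    have := Submodule.mem_map_of_mem (f := I.mkQ) hw
    rw [Submodule.map_span] at this
    refine Submodule.span_mono ?_ this
    rintro _ ⟨_, ⟨b, hb, p, hp, rfl⟩, rfl⟩
    simp only [T, Finset.coe_image]
    exact ⟨(b, p), by simpa using ⟨hb, hp⟩, rfl⟩
  have hcard : T.card ≤ B.card * Nat.choose (m + 1) 2 := by
    refine Finset.card_image_le.trans ?_
    rw [Finset.card_product]
    exact Nat.mul_le_mul_left _ (card_trianglePairs m)
  have hfin : Module.finrank F (A ⧸ I) ≤ T.card := by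
    rw [← finrank_top, ← hT]
    exact finrank_span_finset_le_card T
  have : Module.Finite F (A ⧸ I) := ⟨⟨T, hT⟩⟩
  have hdep : ¬ LinearIndependent F (fun i : S => I.mkQ (u i)) := by
    intro h
    have := h.fintype_card_le_finrank
    rw [Fintype.card_coe] at this
    omega
  obtain ⟨c, hc, i, hi⟩ := Fintype.not_linearIndependent_iff.1 hdep
  refine ⟨fun i => if h : i ∈ S then c ⟨i, h⟩ else 0, ⟨i, i.2, by simpa using hi⟩, ?_⟩
  have h2 : I.mkQ (∑ i : S, c i • u i) = 0 := by
    rw [map_sum]; simpa using hc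
  have h3 : ∑ i : S, c i • u i ∈ (Ideal.span {f, g}) ^ m := by
    rw [Submodule.mkQ_apply, Submodule.Quotient.mk_eq_zero] at h2
    exact h2
  rw [← Finset.sum_coe_sort]
  simpa using h3

/-- Reduction of monomials modulo the curve equation and `η`. -/
lemma monomial_reduce {F A : Type*} [Field F] [CommRing A] [Algebra F A] (x y : A) (q : ℕ)
    (hq : 2 ≤ q) (W : Submodule F A) (hcurve : x ^ (q + 1) = y ^ q + y)
    (hη : ∀ r : A, (x ^ (q ^ 2) - x) * r ∈ W)
    (hW : ∀ a < q ^ 2, ∀ b < q, x ^ a * y ^ b ∈ W) (b : ℕ) :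
    ∀ a, x ^ a * y ^ b ∈ W := by
  have hq2 : 2 ≤ q ^ 2 := by nlinarith
  induction b using Nat.strong_induction_on with
  | _ b ihb =>
    intro a
    by_cases hb : b < q
    · induction a using Nat.strong_induction_on with
      | _ a iha =>
        by_cases ha : a < q ^ 2
        · exact hW a ha b hb
        · obtain ⟨d, rfl⟩ := Nat.exists_eq_add_of_le (not_lt.1 ha)
          have : x ^ (q ^ 2 + d) * y ^ b
              = x ^ (d + 1) * y ^ b + (x ^ (q ^ 2) - x) * (x ^ d * y ^ b) := by ring
          rw [this]
          exact W.add_mem (iha _ (by omega)) (hη _)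
    · obtain ⟨d, rfl⟩ := Nat.exists_eq_add_of_le (not_lt.1 hb)
      have : x ^ a * y ^ (q + d) = x ^ (a + (q + 1)) * y ^ d - x ^ a * y ^ (d + 1) := by
        rw [pow_add x a, hcurve]; ring
      rw [this]
      exact W.sub_mem (ihb _ (by omega) _) (ihb _ (by omega) _)

lemma ideal_mul_mem_right' {A : Type*} [CommRing A] (I : Ideal A) (a b : A) (h : a ∈ I) :
    a * b ∈ I := I.mul_mem_right b h

/-- `x^a y^b` (`a < q²`, `b < q`) generate `R[z]` modulo `(z - h, η)`. -/
lemma base_span (q : ℕ) (hq : 2 ≤ q) (F : Type*) [Field F] (K : Ideal (MvPolynomial (Fin 2) F))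
    (hK : (X 0 : MvPolynomial (Fin 2) F) ^ (q + 1) - X 1 ^ q - X 1 ∈ K)
    (h : MvPolynomial (Fin 2) F ⧸ K) (B : Set (Polynomial (MvPolynomial (Fin 2) F ⧸ K)))
    (hB : ∀ a < q ^ 2, ∀ b < q,
      Polynomial.C (Ideal.Quotient.mk K (X 0 ^ a * X 1 ^ b)) ∈ B)
    (p : Polynomial (MvPolynomial (Fin 2) F ⧸ K)) :
    ∃ w ∈ Submodule.span F B, p - w ∈ Ideal.span {Polynomial.X - Polynomial.C h,
      Polynomial.C (Ideal.Quotient.mk K ((X 0 : MvPolynomial (Fin 2) F) ^ (q ^ 2) - X 0))} := by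
  set J := Ideal.span {Polynomial.X - Polynomial.C h,
      Polynomial.C (Ideal.Quotient.mk K ((X 0 : MvPolynomial (Fin 2) F) ^ (q ^ 2) - X 0))}
    with hJ
  let W := Submodule.span F B ⊔ J.restrictScalars F
  have hJW : ∀ r ∈ J, r ∈ W := fun r hr => Submodule.mem_sup_right (by simpa using hr)
  let θ : MvPolynomial (Fin 2) F →+* Polynomial (MvPolynomial (Fin 2) F ⧸ K) :=
    Polynomial.C.comp (Ideal.Quotient.mk K)
  have hθ : ∀ r, θ r = Polynomial.C (Ideal.Quotient.mk K r) := fun _ => rfl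
  have hmon : ∀ a b : ℕ, θ (X 0) ^ a * θ (X 1) ^ b ∈ W := by
    intro a b
    refine monomial_reduce (F := F) (A := Polynomial (MvPolynomial (Fin 2) F ⧸ K)) _ _ q hq W ?_ ?_ ?_ b a
    · have : θ ((X 0 : MvPolynomial (Fin 2) F) ^ (q + 1) - X 1 ^ q - X 1) = 0 := by
        rw [hθ, Ideal.Quotient.eq_zero_iff_mem.2 hK, map_zero]
      rw [map_sub, map_sub, map_pow, map_pow] at this
      linear_combination this
    · intro r
      refine hJW _ (ideal_mul_mem_right' (A := Polynomial (MvPolynomial (Fin 2) F ⧸ K)) J _ _ ?_)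
      rw [← map_pow, ← map_sub]
      exact Ideal.subset_span (by simp [hθ])
    · intro a ha b hb
      rw [← map_pow, ← map_pow, ← map_mul]
      exact Submodule.mem_sup_left (Submodule.subset_span (hB a ha b hb))
  have hsmul : ∀ (c : F) (r : MvPolynomial (Fin 2) F), θ (C c * r) = c • θ r := by
    intro c r
    rw [← MvPolynomial.smul_eq_C_mul, hθ, hθ, Polynomial.smul_C]
    rfl
  have hall : ∀ r, θ r ∈ W := by
    intro r
    induction r using MvPolynomial.induction_on' with
    | monomial u c =>
      rw [MvPolynomial.monomial_eq, hsmul]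
      refine W.smul_mem _ ?_
      rw [Finsupp.prod_fintype _ _ (by simp)]
      simpa [Fin.prod_univ_two] using hmon (u 0) (u 1)
    | add p r hp hr => rw [map_add]; exact W.add_mem hp hr
  have hp : p ∈ W := by
    have h1 : p - Polynomial.C (p.eval h) ∈ J := by
      have : Polynomial.X - Polynomial.C h ∣ p - Polynomial.C (p.eval h) :=
        Polynomial.X_sub_C_dvd_sub_C_eval
      obtain ⟨r, hr⟩ := this
      have hmem : Polynomial.X - Polynomial.C h ∈ J := Ideal.subset_span (by simp)
      rw [hr]
      exact ideal_mul_mem_right' (A := Polynomial (MvPolynomial (Fin 2) F ⧸ K)) J _ _ hmem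
    obtain ⟨r, hr⟩ := Ideal.Quotient.mk_surjective (p.eval h)
    have := W.add_mem (hJW _ h1) (hall r)
    rwa [hθ, hr, sub_add_cancel] at this
  obtain ⟨w, hw, j, hj, hwj⟩ := Submodule.mem_sup.1 hp
  exact ⟨w, hw, by rw [← hwj, add_sub_cancel_left]; simpa using hj⟩

/-- Let `m ≥ 1` and `v ∈ F^n`. If `Ω'` is a finite set of monomials `x^i y^j z^k` of `R[z]`
(with `0 ≤ j ≤ q−1`) such that `|Ω'| > n·m(m+1)/2`, then there exist coefficients
`c_φ ∈ F`, not all zero, such that `Σ_{φ ∈ Ω'} c_φ φ` lies in `I_{v,m} = ⟨z − h_v, η⟩^m`. -/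
theorem stmt_12 (q : ℕ) (hq : IsPrimePow q) (F : Type*) [Field F] [Fintype F] [DecidableEq F]
    (hF : Fintype.card F = q ^ 2)
    (m : ℕ) (hm : 1 ≤ m)
    (P : Fin (q ^ 3) → F × F)
    (hPinj : Function.Injective P)
    (hPcurve : ∀ i, (P i).1 ^ (q + 1) = (P i).2 ^ q + (P i).2)
    (hPsurj : ∀ a b : F, a ^ (q + 1) = b ^ q + b → ∃ i, P i = (a, b))
    (v : Fin (q ^ 3) → F)
    (Ω' : Finset (ℕ × Fin q × ℕ))
    (hΩ : q ^ 3 * Nat.choose (m + 1) 2 < Ω'.card) :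
    ∃ cf : ℕ × Fin q × ℕ → F,
      (∃ φ ∈ Ω', cf φ ≠ 0) ∧
      (∑ φ ∈ Ω', Polynomial.C (Ideal.Quotient.mk
            (Ideal.span {(X 0 : MvPolynomial (Fin 2) F) ^ (q + 1) - X 1 ^ q - X 1})
            (C (cf φ) * X 0 ^ φ.1 * X 1 ^ (φ.2.1 : ℕ))) *
          Polynomial.X ^ φ.2.2) ∈
        (Ideal.span
          { Polynomial.X - Polynomial.C (Ideal.Quotient.mk
              (Ideal.span {(X 0 : MvPolynomial (Fin 2) F) ^ (q + 1) - X 1 ^ q - X 1})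
              (∑ i, C (v i) * Hpoly q (P i).1 (P i).2)),
            Polynomial.C (Ideal.Quotient.mk
              (Ideal.span {(X 0 : MvPolynomial (Fin 2) F) ^ (q + 1) - X 1 ^ q - X 1})
              ((X 0 : MvPolynomial (Fin 2) F) ^ (q ^ 2) - X 0)) }) ^ m := by
  classical
  set K := Ideal.span {(X 0 : MvPolynomial (Fin 2) F) ^ (q + 1) - X 1 ^ q - X 1} with hKdef
  let B : Finset (Polynomial (MvPolynomial (Fin 2) F ⧸ K)) :=
    (Finset.range (q ^ 2) ×ˢ Finset.range q).image
      fun ab => Polynomial.C (Ideal.Quotient.mk K (X 0 ^ ab.1 * X 1 ^ ab.2))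
  have hBcard : B.card ≤ q ^ 3 := by
    refine Finset.card_image_le.trans ?_
    rw [Finset.card_product, Finset.card_range, Finset.card_range]
    exact (by ring : q ^ 2 * q = q ^ 3).le
  have hB := base_span q hq.two_le F K (Ideal.subset_span rfl)
    (Ideal.Quotient.mk K (∑ i, C (v i) * Hpoly q (P i).1 (P i).2)) (B : Set _) (by
      intro a ha b hb
      simp only [B, Finset.coe_image]
      exact ⟨(a, b), by simp [ha, hb], rfl⟩)
  obtain ⟨c, hc, hsum⟩ := exists_relation _ _ B hB m Ω'
    (fun φ => Polynomial.C (Ideal.Quotient.mk K (X 0 ^ φ.1 * X 1 ^ (φ.2.1 : ℕ))) *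
      Polynomial.X ^ φ.2.2)
    (lt_of_le_of_lt (Nat.mul_le_mul_right _ hBcard) hΩ)
  refine ⟨c, hc, ?_⟩
  convert hsum using 1
  refine Finset.sum_congr rfl fun φ _ => ?_
  rw [← smul_mul_assoc, Polynomial.smul_C, mul_assoc, ← MvPolynomial.smul_eq_C_mul]
  rfl
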